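/- Let S be a homomorphism of the Fibonacci language L_F and let E = {(1,1), (1,2), (1,3), (2,1)}. If (S(0), S(1)) ∈ E then ℕ \ S(L_F) is empty; otherwise ℕ \ S(L_F) has infinite cardinality. -/

import Mathlib

/-- `w` is a nonempty finite factor of the infinite word `f`. -/
def IsFactor {A : Type*} (f : ℕ → A) (w : List A) : Prop :=
  w ≠ [] ∧ ∃ i : ℕ, w = (List.range w.length).map fun j => f (i + j)

/-- The golden mean `Φ = (1+√5)/2`. -/
noncomputable def Phi : ℝ := (1 + Real.sqrt 5) / 2

/-- The Fibonacci word `c(n) = ⌊(n+2)α⌋ − ⌊(n+1)α⌋` with `α = 2 − Φ`. -/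
noncomputable def fibWord (n : ℕ) : ℤ :=
  ⌊((n : ℝ) + 2) * (2 - Phi)⌋ - ⌊((n : ℝ) + 1) * (2 - Phi)⌋

/-- The infinite word `0c`: the Fibonacci word prefixed by `0`. -/
noncomputable def fibWord0 (n : ℕ) : ℤ :=
  if n = 0 then 0 else fibWord (n - 1)

/-- The infinite word `1c`: the Fibonacci word prefixed by `1`. -/
noncomputable def fibWord1 (n : ℕ) : ℤ :=
  if n = 0 then 1 else fibWord (n - 1)

/-- The Fibonacci language: nonempty finite factors of `0c` or of `1c`. -/
def fibLang : Set (List ℤ) :=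
  {w | IsFactor fibWord0 w ∨ IsFactor fibWord1 w}

/-- The homomorphism determined by `S0 = S(0)`, `S1 = S(1)`:
`S(w) = N_0(w)·S0 + N_1(w)·S1`. -/
def wordVal01 (S0 S1 : ℕ) (w : List ℤ) : ℕ :=
  w.count 0 * S0 + w.count 1 * S1

/-- `F n = ⌊n α⌋`. -/
noncomputable def FF (n : ℕ) : ℤ := ⌊(n : ℝ) * (2 - Phi)⌋

lemma Phi_bounds : 1.618 < Phi ∧ Phi < 1.6181 := by
  unfold Phi
  have h1 : (2.236 : ℝ) < Real.sqrt 5 := by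
    apply Real.lt_sqrt_of_sq_lt; norm_num
  have h2 : Real.sqrt 5 < (2.2362 : ℝ) := by
    rw [Real.sqrt_lt' (by norm_num)]; norm_num
  constructor <;> linarith

lemma FF_zero : FF 0 = 0 := by simp [FF]

lemma FF_one : FF 1 = 0 := by
  unfold FF
  rw [Int.floor_eq_iff]
  have := Phi_bounds
  push_cast
  constructor <;> linarith [this.1, this.2]

lemma FF_two : FF 2 = 0 := by
  unfold FF
  rw [Int.floor_eq_iff]
  have := Phi_bounds
  push_cast
  constructor <;> linarith [this.1, this.2]

lemma FF_add (i n : ℕ) : FF (i + n) = FF i + FF n ∨ FF (i + n) = FF i + FF n + 1 := by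
  unfold FF
  push_cast
  rw [add_mul]
  have h1 := Int.le_floor_add ((i : ℝ) * (2 - Phi)) ((n : ℝ) * (2 - Phi))
  have h2 := Int.le_floor_add_floor ((i : ℝ) * (2 - Phi)) ((n : ℝ) * (2 - Phi))
  omega

lemma FF_succ (n : ℕ) : FF (n + 1) = FF n ∨ FF (n + 1) = FF n + 1 := by
  have := FF_add n 1
  rw [FF_one] at this
  simpa using this

lemma FF_succ2 (n : ℕ) : FF (n + 2) = FF n ∨ FF (n + 2) = FF n + 1 := by
  have := FF_add n 2
  rw [FF_two] at this
  simpa using this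

lemma fibWord_eq (n : ℕ) : fibWord n = FF (n + 2) - FF (n + 1) := by
  unfold fibWord FF; push_cast; rfl

lemma fibWord0_eq (n : ℕ) : fibWord0 n = FF (n + 1) - FF n := by
  unfold fibWord0
  rcases n with _ | n
  · simp [FF_one, FF_zero]
  · simp [fibWord_eq]

lemma fibWord1_eq (n : ℕ) : fibWord1 n = fibWord0 n + if n = 0 then 1 else 0 := by
  unfold fibWord1 fibWord0
  split_ifs <;> simp

lemma fibWord0_mem (n : ℕ) : fibWord0 n = 0 ∨ fibWord0 n = 1 := by
  rw [fibWord0_eq]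
  have := FF_succ n
  omega

lemma fibWord1_mem (n : ℕ) : fibWord1 n = 0 ∨ fibWord1 n = 1 := by
  rcases n with _ | n
  · simp [fibWord1]
  · have := fibWord0_mem (n + 1)
    simpa [fibWord1_eq] using this

lemma count_lemma (f : ℕ → ℤ) (hf : ∀ n, f n = 0 ∨ f n = 1) (n : ℕ) :
    ((((List.range n).map f).count 1 : ℕ) : ℤ) = ∑ j ∈ Finset.range n, f j ∧
    ((((List.range n).map f).count 0 : ℕ) : ℤ) = n - ∑ j ∈ Finset.range n, f j := by
  induction n with
  | zero => simp
  | succ n ih =>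
    rw [List.range_succ, List.map_append, List.count_append, List.count_append,
      Finset.sum_range_succ]
    rcases hf n with h | h <;> simp [h] <;> omega

lemma sum0 (i n : ℕ) : ∑ j ∈ Finset.range n, fibWord0 (i + j) = FF (i + n) - FF i := by
  induction n with
  | zero => simp
  | succ n ih => rw [Finset.sum_range_succ, ih, fibWord0_eq]; ring_nf

lemma sum1 (i n : ℕ) (hn : 0 < n) : ∑ j ∈ Finset.range n, fibWord1 (i + j) =
    FF (i + n) - FF i + if i = 0 then 1 else 0 := by
  simp only [fibWord1_eq, Finset.sum_add_distrib, sum0]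
  congr 1
  rcases i with _ | i
  · simp [hn]
  · simp

lemma val_lemma (S0 S1 : ℕ) (f : ℕ → ℤ) (hf : ∀ n, f n = 0 ∨ f n = 1) (n : ℕ) :
    (wordVal01 S0 S1 ((List.range n).map f) : ℤ) =
      n * S0 + ((S1 : ℤ) - S0) * ∑ j ∈ Finset.range n, f j := by
  obtain ⟨h1, h2⟩ := count_lemma f hf n
  unfold wordVal01
  push_cast
  rw [h1, h2]
  ring

lemma char_lemma (S0 S1 m : ℕ) : (∃ w ∈ fibLang, wordVal01 S0 S1 w = m) ↔
    ∃ n : ℕ, 0 < n ∧ ((m : ℤ) = n * S0 + ((S1 : ℤ) - S0) * FF n ∨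
      (m : ℤ) = n * S0 + ((S1 : ℤ) - S0) * (FF n + 1)) := by
  constructor
  · rintro ⟨w, hw, rfl⟩
    rcases hw with ⟨hne, i, hi⟩ | ⟨hne, i, hi⟩
    · have hpos := List.length_pos_iff.mpr hne
      refine ⟨w.length, hpos, ?_⟩
      generalize w.length = n at *
      subst hi
      rw [val_lemma S0 S1 _ (fun j => fibWord0_mem (i + j)), sum0]
      rcases FF_add i n with h | h
      · left; rw [h]; ring
      · right; rw [h]; ring
    · have hpos := List.length_pos_iff.mpr hne
      refine ⟨w.length, hpos, ?_⟩
      generalize w.length = n at *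
      subst hi
      rw [val_lemma S0 S1 _ (fun j => fibWord1_mem (i + j)), sum1 _ _ hpos]
      split_ifs with h0
      · subst h0; right; simp [FF_zero]
      · rcases FF_add i n with h | h
        · left; rw [h]; ring
        · right; rw [h]; ring
  · rintro ⟨n, hn, h | h⟩
    · refine ⟨(List.range n).map fun j => fibWord0 (0 + j), Or.inl ⟨?_, 0, ?_⟩, ?_⟩
      · simp; omega
      · simp
      · have := val_lemma S0 S1 _ (fun j => fibWord0_mem (0 + j)) n
        rw [sum0] at this
        simp only [FF_zero, zero_add, sub_zero] at this ⊢
        omega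
    · refine ⟨(List.range n).map fun j => fibWord1 (0 + j), Or.inr ⟨?_, 0, ?_⟩, ?_⟩
      · simp; omega
      · simp
      · have := val_lemma S0 S1 _ (fun j => fibWord1_mem (0 + j)) n
        rw [sum1 _ _ hn] at this
        simp only [FF_zero, zero_add, sub_zero, if_true] at this ⊢
        omega

lemma sandwich (a : ℕ → ℤ) (h1 : a 1 = 1) (ha : ∀ n, a n < a (n + 1)) (m : ℕ) (hm : 0 < m) :
    ∃ n : ℕ, 0 < n ∧ a n ≤ m ∧ (m : ℤ) < a (n + 1) := by
  induction m, hm using Nat.le_induction with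
  | base => exact ⟨1, by omega, by simp [h1], by have := ha 1; simp at *; omega⟩
  | succ m hm ih =>
    obtain ⟨n, hn, h, h'⟩ := ih
    by_cases hc : ((m + 1 : ℕ) : ℤ) < a (n + 1)
    · exact ⟨n, hn, by push_cast; omega, hc⟩
    · refine ⟨n + 1, by omega, by omega, ?_⟩
      have := ha (n + 1)
      push_cast at *; omega

lemma part1 (S0 S1 : ℕ)
    (h : (S0, S1) ∈ ({(1, 1), (1, 2), (1, 3), (2, 1)} : Set (ℕ × ℕ))) (m : ℕ) (hm : 0 < m) :
    ∃ w ∈ fibLang, wordVal01 S0 S1 w = m := by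
  rw [char_lemma]
  simp only [Set.mem_insert_iff, Set.mem_singleton_iff, Prod.mk.injEq] at h
  rcases h with ⟨rfl, rfl⟩ | ⟨rfl, rfl⟩ | ⟨rfl, rfl⟩ | ⟨rfl, rfl⟩
  · exact ⟨m, hm, by simp⟩
  · obtain ⟨n, hn, h, h'⟩ := sandwich (fun n => n + FF n) (by simp [FF_one])
      (by intro n; have := FF_succ n; push_cast; omega) m hm
    refine ⟨n, hn, ?_⟩
    have := FF_succ n
    push_cast at *
    omega
  · obtain ⟨n, hn, h, h'⟩ := sandwich (fun n => n + 2 * FF n) (by simp [FF_one])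
      (by intro n; have := FF_succ n; push_cast; omega) m hm
    push_cast at h h'
    by_cases hc : (m : ℤ) = n + 2 * FF n + 1
    · rcases FF_succ n with h1 | h1
      · omega
      · obtain ⟨k, rfl⟩ : ∃ k, n = k + 1 := ⟨n - 1, by omega⟩
        have h2 := FF_succ2 k
        have h3 := FF_succ k
        have hk : k ≠ 0 := by
          rintro rfl
          simp [FF_one, FF_two] at h1
        refine ⟨k, by omega, ?_⟩
        push_cast at *
        have h4 : FF (k + 1 + 1) = FF (k + 2) := rfl
        omega
    · refine ⟨n, hn, ?_⟩
      have := FF_succ n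
      push_cast at *
      omega
  · obtain ⟨n, hn, h, h'⟩ := sandwich (fun n => 2 * n - FF n - 1) (by simp [FF_one])
      (by intro n; have := FF_succ n; push_cast; omega) m hm
    refine ⟨n, hn, ?_⟩
    have := FF_succ n
    push_cast at *
    omega

lemma gamma_lower (S0 S1 : ℕ) (hS0 : 0 < S0) (hS1 : 0 < S1)
    (h : (S0, S1) ∉ ({(1, 1), (1, 2), (1, 3), (2, 1)} : Set (ℕ × ℕ)))
    (h2 : ¬ (S0 = 2 ∧ S1 = 2)) : (2.1 : ℝ) < S0 * (Phi - 1) + S1 * (2 - Phi) := by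
  have hb := Phi_bounds
  have key : (S0 = 1 ∧ 4 ≤ S1) ∨ (S0 = 2 ∧ 3 ≤ S1) ∨ (3 ≤ S0 ∧ 1 ≤ S1) := by
    simp only [Set.mem_insert_iff, Set.mem_singleton_iff, Prod.mk.injEq] at h
    omega
  obtain ⟨ha, hb⟩ := hb
  rcases key with ⟨h, h'⟩ | ⟨h, h'⟩ | ⟨h, h'⟩
  · have : (4 : ℝ) ≤ S1 := by exact_mod_cast h'
    subst h; push_cast; nlinarith
  · have : (3 : ℝ) ≤ S1 := by exact_mod_cast h'
    subst h; push_cast; nlinarith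
  · have h1 : (3 : ℝ) ≤ S0 := by exact_mod_cast h
    have h2 : (1 : ℝ) ≤ S1 := by exact_mod_cast h'
    nlinarith

/-- each value coming from length `n` is at least `γ n - C`. -/
lemma val_lower (S0 S1 n m : ℕ) (hv : (m : ℤ) = n * S0 + ((S1 : ℤ) - S0) * FF n ∨
      (m : ℤ) = n * S0 + ((S1 : ℤ) - S0) * (FF n + 1)) :
    (n : ℝ) * (S0 * (Phi - 1) + S1 * (2 - Phi)) ≤ m + (S0 + S1) := by
  have f1 : (FF n : ℝ) ≤ n * (2 - Phi) := Int.floor_le _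
  have f2 : n * (2 - Phi) < (FF n : ℝ) + 1 := Int.lt_floor_add_one _
  have p0 : (0 : ℝ) ≤ S0 := by positivity
  have p1 : (0 : ℝ) ≤ S1 := by positivity
  rcases hv with h | h
  · have h' : (m : ℝ) = n * S0 + ((S1 : ℝ) - S0) * FF n := by exact_mod_cast h
    rw [h']
    nlinarith [mul_nonneg p0 (sub_nonneg.2 f1), mul_nonneg p1 (sub_nonneg.2 f2.le)]
  · have h' : (m : ℝ) = n * S0 + ((S1 : ℝ) - S0) * (FF n + 1) := by exact_mod_cast h
    rw [h']
    nlinarith [mul_nonneg p0 (sub_nonneg.2 f1), mul_nonneg p1 (sub_nonneg.2 f2.le)]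

lemma part2 (S0 S1 : ℕ) (hS0 : 0 < S0) (hS1 : 0 < S1)
    (h : (S0, S1) ∉ ({(1, 1), (1, 2), (1, 3), (2, 1)} : Set (ℕ × ℕ)))
    (h2 : ¬ (S0 = 2 ∧ S1 = 2)) :
    {n : ℕ | 0 < n ∧ n ∉ {m : ℕ | ∃ w ∈ fibLang, wordVal01 S0 S1 w = m}}.Infinite := by
  intro hfin
  have hg := gamma_lower S0 S1 hS0 hS1 h h2
  set T := hfin.toFinset with hT
  -- N = 21 K, and the lengths contributing values up to N are at most 10 K + C
  set C := S0 + S1 with hC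
  set K := 2 * C + T.card + 3 with hK
  let V : Finset ℕ := (Finset.range (10 * K + C + 1)).image
      (fun n : ℕ => ((n : ℤ) * S0 + ((S1 : ℤ) - S0) * FF n).toNat) ∪
    (Finset.range (10 * K + C + 1)).image
      (fun n : ℕ => ((n : ℤ) * S0 + ((S1 : ℤ) - S0) * (FF n + 1)).toNat)
  have hsub : Finset.Icc 1 (21 * K) ⊆ T ∪ V := by
    intro m hm
    rw [Finset.mem_Icc] at hm
    by_cases hmv : ∃ w ∈ fibLang, wordVal01 S0 S1 w = m
    · rw [char_lemma] at hmv
      obtain ⟨n, -, hv⟩ := hmv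
      have hl := val_lower S0 S1 n m hv
      have hn : n < 10 * K + C + 1 := by
        by_contra hcon
        push Not at hcon
        have e1 : ((10 * K + C + 1 : ℕ) : ℝ) ≤ n := by exact_mod_cast hcon
        have e2 : (m : ℝ) ≤ ((21 * K : ℕ) : ℝ) := by exact_mod_cast hm.2
        have e3 : ((C : ℕ) : ℝ) = S0 + S1 := by rw [hC]; push_cast; ring
        have e4 : (n : ℝ) * 2.1 ≤ n * (S0 * (Phi - 1) + S1 * (2 - Phi)) := by gcongr
        have e5 : (0 : ℝ) ≤ C := by positivity
        push_cast at e1 e2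
        linarith
      apply Finset.mem_union_right
      rcases hv with hv | hv
      · apply Finset.mem_union_left
        exact Finset.mem_image.2 ⟨n, Finset.mem_range.2 hn, by omega⟩
      · apply Finset.mem_union_right
        exact Finset.mem_image.2 ⟨n, Finset.mem_range.2 hn, by omega⟩
    · apply Finset.mem_union_left
      rw [hT, Set.Finite.mem_toFinset]
      exact ⟨by omega, hmv⟩
  have c1 := Finset.card_le_card hsub
  have c2 := Finset.card_union_le T V
  have c3 : V.card ≤ (10 * K + C + 1) + (10 * K + C + 1) := by
    refine (Finset.card_union_le _ _).trans (add_le_add ?_ ?_) <;>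
    exact Finset.card_image_le.trans (by simp)
  rw [Nat.card_Icc] at c1
  omega

theorem fib_zero_infinity_law (S0 S1 : ℕ) (hS0 : 0 < S0) (hS1 : 0 < S1) :
    (((S0, S1) ∈ ({(1, 1), (1, 2), (1, 3), (2, 1)} : Set (ℕ × ℕ))) →
      {n : ℕ | 0 < n ∧ n ∉ {m : ℕ | ∃ w ∈ fibLang, wordVal01 S0 S1 w = m}} = ∅) ∧
    (((S0, S1) ∉ ({(1, 1), (1, 2), (1, 3), (2, 1)} : Set (ℕ × ℕ))) →
      {n : ℕ | 0 < n ∧ n ∉ {m : ℕ | ∃ w ∈ fibLang, wordVal01 S0 S1 w = m}}.Infinite) := by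
  constructor
  · intro h
    ext m
    simp only [Set.mem_setOf_eq, Set.mem_empty_iff_false, iff_false, not_and, not_not]
    exact part1 S0 S1 h m
  · intro h
    by_cases h2 : S0 = 2 ∧ S1 = 2
    · obtain ⟨rfl, rfl⟩ := h2
      apply Set.infinite_of_injective_forall_mem (f := fun k : ℕ => 2 * k + 1)
      · intro a b hab
        simp at hab
        exact hab
      · intro k
        refine ⟨by simp, ?_⟩
        simp only [Set.mem_setOf_eq]
        rw [char_lemma]
        rintro ⟨n, -, h | h⟩ <;> push_cast at h <;> simp at h <;> omega
    · exact part2 S0 S1 hS0 hS1 h h2
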